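/- arXiv:1911.09564 — 3 statements merged into one kernel-verified Lean document; each statement's English description precedes it below -/
import Mathlib

section
/- Regret decomposition for the magnitude-direction reduction: Let d ≥ 1, T ≥ 1, and let ĝ_1,…,ĝ_T ∈ ℝ^d, q_1,…,q_T ∈ ℝ^d, and m_1,…,m_T ∈ ℝ be arbitrary. For t = 1,…,T set s_t = ⟨ĝ_t, q_t⟩. Then for every u ∈ ℝ^d, ∑_{t=1}^T ⟨ĝ_t, u − m_t q_t⟩ = ∑_{t=1}^T s_t (‖u‖₂ − m_t) + ‖u‖₂ ∑_{t=1}^T ⟨ĝ_t, u/‖u‖₂ − q_t⟩, where u/‖u‖₂ is taken to be the zero vector when u = 0. In particular, the regret of the combined iterates m_t q_t against any comparator u is bounded by the magnitude learner's regret against ‖u‖₂ plus ‖u‖₂ times the direction learner's regret against u/‖u‖₂. -/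
open scoped Classical
open Finset
open scoped RealInnerProductSpace

section Module

variable {ι R M N : Type*} [Ring R] [AddCommGroup M] [Module R M] [AddCommGroup N] [Module R N]

theorem smul_sub_smul_eq_sub_smul_add_smul_sub (r c : R) (v q : M) :
    r • v - c • q = (r - c) • q + r • (v - q) := by
  rw [sub_smul, smul_sub]
  abel

theorem sum_map_smul_sub_smul (A : Finset ι) (g : ι → M →ₗ[R] N) (q : ι → M)
    (m : ι → R) (r : R) (v : M) :
    ∑ t ∈ A, g t (r • v - m t • q t)
      = ∑ t ∈ A, (r - m t) • g t (q t) + r • ∑ t ∈ A, g t (v - q t) := by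
  simp only [smul_sub_smul_eq_sub_smul_add_smul_sub, map_add, map_smul, sum_add_distrib,
    smul_sum]

end Module

section NormedSpace

variable {ι E : Type*} [NormedAddCommGroup E] [NormedSpace ℝ E]

theorem ite_zero_inv_norm_smul_eq_normalize (u : E) [Decidable (u = 0)] :
    (if u = 0 then 0 else ‖u‖⁻¹ • u) = NormedSpace.normalize u :=
  ite_eq_right_iff.mpr fun hu => ((NormedSpace.normalize_eq_zero_iff u).mpr hu).symm

theorem banco_regret_decomposition_general (A : Finset ι) (g : ι → Module.Dual ℝ E)
    (q : ι → E) (m s : ι → ℝ) (hs : ∀ t ∈ A, s t = g t (q t)) (u : E) :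
    ∑ t ∈ A, g t (u - m t • q t)
      = ∑ t ∈ A, s t * (‖u‖ - m t)
        + ‖u‖ * ∑ t ∈ A, g t (NormedSpace.normalize u - q t) := by
  have hmagnitude : ∑ t ∈ A, (‖u‖ - m t) • g t (q t) = ∑ t ∈ A, s t * (‖u‖ - m t) :=
    sum_congr rfl fun t ht => by rw [hs t ht, smul_eq_mul, mul_comm]
  rw [← hmagnitude, ← smul_eq_mul ‖u‖, ← sum_map_smul_sub_smul, NormedSpace.norm_smul_normalize]

end NormedSpace

/-- **Regret decomposition for the magnitude-direction reduction.**
For arbitrary vectors `ĝ_t, q_t ∈ ℝ^d`, scalars `m_t`, with `s_t = ⟪ĝ_t, q_t⟫`,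
and any comparator `u`, the total regret of the combined iterates `m_t • q_t`
decomposes exactly as the magnitude regret against `‖u‖` plus `‖u‖` times the
direction regret against `u / ‖u‖` (taken to be `0` when `u = 0`). -/
theorem banco_regret_decomposition
    (d T : ℕ) (hd : 1 ≤ d) (hT : 1 ≤ T)
    (ghat q : Fin T → EuclideanSpace ℝ (Fin d)) (m : Fin T → ℝ)
    (s : Fin T → ℝ) (hs : ∀ t, s t = ⟪ghat t, q t⟫)
    (u : EuclideanSpace ℝ (Fin d)) :
    ∑ t : Fin T, ⟪ghat t, u - m t • q t⟫
      = (∑ t : Fin T, s t * (‖u‖ - m t))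
        + ‖u‖ * ∑ t : Fin T, ⟪ghat t, (if u = 0 then 0 else ‖u‖⁻¹ • u) - q t⟫ ∧
    ∑ t : Fin T, ⟪ghat t, u - m t • q t⟫
      ≤ (∑ t : Fin T, s t * (‖u‖ - m t))
        + ‖u‖ * ∑ t : Fin T, ⟪ghat t, (if u = 0 then 0 else ‖u‖⁻¹ • u) - q t⟫ := by
  rw [ite_zero_inv_norm_smul_eq_normalize, and_iff_left_of_imp le_of_eq]
  exact banco_regret_decomposition_general univ (fun t => innerₗ _ (ghat t)) q m s
    (fun t _ => hs t) u
end

section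
/- Sub-exponential tail bound for the multivariate Laplace-type noise: Fix ε > 0 and d ≥ 1, and let ξ be a random vector in ℝ^d with probability density proportional to exp(−(ε/2)‖z‖₂). Then max_{‖a‖₂≤1} E[exp(β⟨ξ,a⟩)] ≤ exp(β² σ_1D²/2) holds for all β ∈ ℝ with |β| ≤ 1/b, where σ_1D² = 18 d²/ε² and b = 4/ε; that is, ξ is sub-exponential with parameters (σ_1D², b) = (18 d²/ε², 4/ε). -/
open MeasureTheory
open scoped RealInnerProductSpace

/-!
Because the noise is symmetric, replacing `exp (β ℓ)` by `cosh (β ℓ)` does not change its mean, and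
`|ℓ z| ≤ ‖z‖` bounds that mean by `E[cosh (β ‖ξ‖)]`. The law of `‖ξ‖` is a Gamma law: tilting the
density `exp (-κ ‖z‖)` by `exp (β ‖z‖)` only changes the rate to `κ - β`, and the total mass at
rate `κ` scales like `κ⁻ᵈ`, so `E[exp (β ‖ξ‖)] = (1 - β / κ)⁻ᵈ`. With `t = β / κ`, the estimate
`(1 - t)⁻¹ ≤ exp (t + t²)` turns the mean of the two values at `±β` into `exp (d t²) cosh (d t)`,
which is at most `exp (d t² + (d t)² / 2)`.
-/

open ProbabilityTheory Module

section RealEstimates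

lemma inv_one_sub_le_exp_add_sq {t : ℝ} (ht : t ≤ 1 / 2) :
    (1 - t)⁻¹ ≤ Real.exp (t + t ^ 2) := by
  have hpos : 0 < 1 - t := by linarith
  rw [inv_le_iff_one_le_mul₀ hpos]
  rcases le_total 0 t with h0 | h0
  · have hgap : 0 ≤ (1 - t) * (1 + t) ^ 2 / 2 - t := by
      nlinarith [mul_nonneg (sub_nonneg.2 ht) (sq_nonneg (1 + t)), sq_nonneg (1 - t)]
    calc 1 ≤ 1 + t ^ 2 * ((1 - t) * (1 + t) ^ 2 / 2 - t) :=
          le_add_of_nonneg_right (mul_nonneg (sq_nonneg t) hgap)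
      _ = (1 + (t + t ^ 2) + (t + t ^ 2) ^ 2 / 2) * (1 - t) := by ring
      _ ≤ Real.exp (t + t ^ 2) * (1 - t) := by
          gcongr
          exact Real.quadratic_le_exp_of_nonneg (by positivity)
  · calc 1 ≤ 1 + t ^ 2 * -t :=
          le_add_of_nonneg_right (mul_nonneg (sq_nonneg t) (neg_nonneg.2 h0))
      _ = (t + t ^ 2 + 1) * (1 - t) := by ring
      _ ≤ Real.exp (t + t ^ 2) * (1 - t) := by
          gcongr
          exact Real.add_one_le_exp _

lemma inv_one_sub_pow_le_exp {t : ℝ} (ht : t ≤ 1 / 2) (n : ℕ) :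
    (1 - t)⁻¹ ^ n ≤ Real.exp (n * (t + t ^ 2)) := by
  rw [Real.exp_nat_mul]
  exact pow_le_pow_left₀ (inv_nonneg.2 (by linarith)) (inv_one_sub_le_exp_add_sq ht) n

lemma inv_one_sub_pow_add_inv_one_add_pow_le {t : ℝ} (ht : |t| ≤ 1 / 2) (n : ℕ) :
    ((1 - t)⁻¹ ^ n + (1 + t)⁻¹ ^ n) / 2 ≤ Real.exp (t ^ 2 * (n * (n + 2)) / 2) := by
  have hminus : (1 - t)⁻¹ ^ n ≤ Real.exp (n * (t + t ^ 2)) :=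
    inv_one_sub_pow_le_exp (le_of_abs_le ht) n
  have hplus : (1 + t)⁻¹ ^ n ≤ Real.exp (n * (-t + t ^ 2)) := by
    simpa using inv_one_sub_pow_le_exp (neg_le.1 (neg_le_of_abs_le ht)) n
  calc ((1 - t)⁻¹ ^ n + (1 + t)⁻¹ ^ n) / 2
      ≤ (Real.exp (n * (t + t ^ 2)) + Real.exp (n * (-t + t ^ 2))) / 2 := by gcongr
    _ = Real.exp (n * t ^ 2) * Real.cosh (n * t) := by
        rw [Real.cosh_eq, mul_div_assoc', mul_add (Real.exp _), ← Real.exp_add, ← Real.exp_add]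
        ring_nf
    _ ≤ Real.exp (n * t ^ 2) * Real.exp ((n * t) ^ 2 / 2) := by
        gcongr
        exact Real.cosh_le_exp_half_sq _
    _ = Real.exp (t ^ 2 * (n * (n + 2)) / 2) := by
        rw [← Real.exp_add]
        ring_nf

lemma exp_mul_add_exp_neg_mul_le_of_abs_le_abs {x y : ℝ} (hxy : |x| ≤ |y|) (t : ℝ) :
    Real.exp (t * x) + Real.exp (-t * x) ≤ Real.exp (t * y) + Real.exp (-t * y) := by
  have hcosh : Real.cosh (t * x) ≤ Real.cosh (t * y) := by
    rw [Real.cosh_le_cosh, abs_mul, abs_mul]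
    gcongr
  rw [Real.cosh_eq, Real.cosh_eq] at hcosh
  simp only [neg_mul]
  linarith

end RealEstimates

section Symmetrization

variable {G : Type*} [MeasurableSpace G]

lemma isNegInvariant_withDensity_of_even [InvolutiveNeg G] [MeasurableNeg G] {ν : Measure G}
    [ν.IsNegInvariant] {f : G → ENNReal} (hf : f.Even) : (ν.withDensity f).IsNegInvariant where
  neg_eq_self := by
    ext s hs
    have hpre := (Measure.measurePreserving_neg ν).setLIntegral_comp_preimage_emb
      (MeasurableEquiv.neg G).measurableEmbedding f s
    rw [Measure.neg, Measure.map_apply measurable_neg hs, withDensity_apply _ hs,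
      withDensity_apply _ (measurable_neg hs), ← hpre]
    simp only [hf _]

variable {μ : Measure G} {X Y : G → ℝ} {t : ℝ}

lemma integrable_exp_mul_of_abs_le_abs (hX : AEStronglyMeasurable X μ)
    (hXY : ∀ x, |X x| ≤ |Y x|) (hpos : Integrable (fun x => Real.exp (t * Y x)) μ)
    (hneg : Integrable (fun x => Real.exp (-t * Y x)) μ) :
    Integrable (fun x => Real.exp (t * X x)) μ := by
  refine (hpos.add hneg).mono' (by fun_prop) (.of_forall fun x => ?_)
  rw [Real.norm_of_nonneg (Real.exp_nonneg _), Pi.add_apply]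
  linarith [exp_mul_add_exp_neg_mul_le_of_abs_le_abs (hXY x) t, Real.exp_nonneg (-t * X x)]

lemma mgf_neg_eq_of_odd [AddGroup G] [MeasurableNeg G] [μ.IsNegInvariant] (hX : X.Odd)
    (t : ℝ) : mgf X μ (-t) = mgf X μ t := by
  rw [mgf, mgf, ← integral_neg_eq_self (fun x => Real.exp (t * X x)) μ]
  simp only [hX _, neg_mul, mul_neg]

lemma mgf_le_of_odd_of_abs_le_abs [AddGroup G] [MeasurableNeg G] [μ.IsNegInvariant]
    (hX : AEStronglyMeasurable X μ) (hodd : X.Odd) (hXY : ∀ x, |X x| ≤ |Y x|)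
    (hpos : Integrable (fun x => Real.exp (t * Y x)) μ)
    (hneg : Integrable (fun x => Real.exp (-t * Y x)) μ) :
    mgf X μ t ≤ (mgf Y μ t + mgf Y μ (-t)) / 2 := by
  have hXpos := integrable_exp_mul_of_abs_le_abs hX hXY hpos hneg
  have hXneg : Integrable (fun x => Real.exp (-t * X x)) μ :=
    integrable_exp_mul_of_abs_le_abs hX hXY hneg (by simpa using hpos)
  have hsum : mgf X μ t + mgf X μ (-t) ≤ mgf Y μ t + mgf Y μ (-t) := by
    simp only [mgf]
    rw [← integral_add hXpos hXneg, ← integral_add hpos hneg]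
    exact integral_mono (hXpos.add hXneg) (hpos.add hneg)
      fun x => exp_mul_add_exp_neg_mul_le_of_abs_le_abs (hXY x) t
  rw [mgf_neg_eq_of_odd hodd] at hsum
  linarith

end Symmetrization

section LaplaceMeasure

variable {E : Type*} [NormedAddCommGroup E] [MeasurableSpace E]

/-- The multivariate Laplace law of rate `κ`: the measure with density `C * exp (-κ * ‖z‖)` with
respect to `ν`. The constant `C` is a parameter, so that normalization is expressed by
`IsProbabilityMeasure (laplaceMeasure ν C κ)`. -/
noncomputable def laplaceMeasure (ν : Measure E) (C κ : ℝ) : Measure E :=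
  ν.withDensity fun z => ENNReal.ofReal (C * Real.exp (-κ * ‖z‖))

lemma laplaceMeasure_univ (ν : Measure E) (C κ : ℝ) :
    laplaceMeasure ν C κ Set.univ = ∫⁻ z, ENNReal.ofReal (C * Real.exp (-κ * ‖z‖)) ∂ν := by
  rw [laplaceMeasure, withDensity_apply _ .univ, Measure.restrict_univ]

instance isNegInvariant_laplaceMeasure [MeasurableNeg E] (ν : Measure E) [ν.IsNegInvariant]
    (C κ : ℝ) : (laplaceMeasure ν C κ).IsNegInvariant :=
  isNegInvariant_withDensity_of_even fun z => by rw [norm_neg]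

lemma laplaceMeasure_withDensity_exp_mul_norm [OpensMeasurableSpace E] (ν : Measure E)
    (C κ β : ℝ) :
    (laplaceMeasure ν C κ).withDensity (fun z => ENNReal.ofReal (Real.exp (β * ‖z‖))) =
      laplaceMeasure ν C (κ - β) := by
  rw [laplaceMeasure, ← withDensity_mul _ (by fun_prop) (by fun_prop), laplaceMeasure]
  congr 1 with z
  rw [Pi.mul_apply, ← ENNReal.ofReal_mul' (Real.exp_nonneg _), mul_assoc, ← Real.exp_add]
  ring_nf

variable [NormedSpace ℝ E] [FiniteDimensional ℝ E] [BorelSpace E] (ν : Measure E)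
  [ν.IsAddHaarMeasure]

lemma lintegral_comp_smul_addHaar (f : E → ENNReal) {r : ℝ} (hr : r ≠ 0) :
    ∫⁻ z, f (r • z) ∂ν = ENNReal.ofReal |(r ^ finrank ℝ E)⁻¹| * ∫⁻ z, f z ∂ν := by
  rw [← (measurableEmbedding_const_smul₀ hr).lintegral_map, Measure.map_addHaar_smul ν hr,
    lintegral_smul_measure, smul_eq_mul]

variable {C κ β : ℝ}

lemma laplaceMeasure_univ_eq_mul (C : ℝ) {κ' : ℝ} (hκ : 0 < κ) (hκ' : 0 < κ') :
    laplaceMeasure ν C κ' Set.univ =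
      ENNReal.ofReal ((κ / κ') ^ finrank ℝ E) * laplaceMeasure ν C κ Set.univ := by
  have hr : 0 < κ' / κ := div_pos hκ' hκ
  have hscale := lintegral_comp_smul_addHaar ν
    (fun z => ENNReal.ofReal (C * Real.exp (-κ * ‖z‖))) hr.ne'
  rw [abs_of_nonneg (by positivity), ← inv_pow, inv_div] at hscale
  rw [laplaceMeasure_univ, laplaceMeasure_univ, ← hscale]
  congr! 5 with z
  rw [norm_smul, Real.norm_of_nonneg hr.le]
  field_simp

lemma lintegral_exp_mul_norm_laplaceMeasure (C : ℝ) (hκ : 0 < κ) (hβ : β < κ) :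
    ∫⁻ z, ENNReal.ofReal (Real.exp (β * ‖z‖)) ∂laplaceMeasure ν C κ =
      ENNReal.ofReal ((κ / (κ - β)) ^ finrank ℝ E) * laplaceMeasure ν C κ Set.univ := by
  rw [← laplaceMeasure_univ_eq_mul ν C hκ (sub_pos.2 hβ),
    ← laplaceMeasure_withDensity_exp_mul_norm, withDensity_apply _ .univ, Measure.restrict_univ]

lemma integrable_exp_mul_norm_laplaceMeasure [IsFiniteMeasure (laplaceMeasure ν C κ)]
    (hκ : 0 < κ) (hβ : β < κ) :
    Integrable (fun z => Real.exp (β * ‖z‖)) (laplaceMeasure ν C κ) := by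
  refine ⟨by fun_prop, ?_⟩
  rw [hasFiniteIntegral_iff_ofReal (.of_forall fun z => Real.exp_nonneg _),
    lintegral_exp_mul_norm_laplaceMeasure ν C hκ hβ]
  exact ENNReal.mul_lt_top ENNReal.ofReal_lt_top (measure_lt_top _ _)

lemma mgf_norm_laplaceMeasure [IsProbabilityMeasure (laplaceMeasure ν C κ)]
    (hκ : 0 < κ) (hβ : β < κ) :
    mgf norm (laplaceMeasure ν C κ) β = (1 - β / κ)⁻¹ ^ finrank ℝ E := by
  rw [mgf, integral_eq_lintegral_of_nonneg_ae (.of_forall fun z => Real.exp_nonneg _)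
    (by fun_prop), lintegral_exp_mul_norm_laplaceMeasure ν C hκ hβ, measure_univ, mul_one,
    ENNReal.toReal_ofReal (pow_nonneg (div_nonneg hκ.le (sub_nonneg.2 hβ.le)) _),
    one_sub_div hκ.ne', inv_div]

theorem laplace_noise_sub_exponential_general [IsProbabilityMeasure (laplaceMeasure ν C κ)]
    (hκ : 0 < κ) {ℓ : StrongDual ℝ E} (hℓ : ‖ℓ‖ ≤ 1) (hβ : |β| ≤ κ / 2) :
    mgf ℓ (laplaceMeasure ν C κ) β ≤
      Real.exp (β ^ 2 * (finrank ℝ E * (finrank ℝ E + 2) / κ ^ 2) / 2) := by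
  have hβκ : |β| < κ := by linarith
  have hpos : β < κ := lt_of_abs_lt hβκ
  have hneg : -β < κ := neg_lt.1 (neg_lt_of_abs_lt hβκ)
  have hratio : |β / κ| ≤ 1 / 2 := by
    rw [abs_div, abs_of_pos hκ, div_le_iff₀ hκ]
    linarith
  have hdom : ∀ z, |ℓ z| ≤ |‖z‖| := fun z => by simpa using ℓ.le_of_opNorm_le hℓ z
  calc mgf ℓ (laplaceMeasure ν C κ) β
      ≤ (mgf norm (laplaceMeasure ν C κ) β + mgf norm (laplaceMeasure ν C κ) (-β)) / 2 :=
        mgf_le_of_odd_of_abs_le_abs (by fun_prop) (map_neg ℓ) hdom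
          (integrable_exp_mul_norm_laplaceMeasure ν hκ hpos)
          (integrable_exp_mul_norm_laplaceMeasure ν hκ hneg)
    _ = ((1 - β / κ)⁻¹ ^ finrank ℝ E + (1 + β / κ)⁻¹ ^ finrank ℝ E) / 2 := by
        rw [mgf_norm_laplaceMeasure ν hκ hpos, mgf_norm_laplaceMeasure ν hκ hneg, neg_div,
          sub_neg_eq_add]
    _ ≤ Real.exp ((β / κ) ^ 2 * (finrank ℝ E * (finrank ℝ E + 2)) / 2) :=
        inv_one_sub_pow_add_inv_one_add_pow_le hratio _
    _ = Real.exp (β ^ 2 * (finrank ℝ E * (finrank ℝ E + 2) / κ ^ 2) / 2) := by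
        rw [div_pow, div_mul_eq_mul_div, mul_div_assoc (β ^ 2)]

end LaplaceMeasure

/-- **Sub-exponential tail bound for the multivariate Laplace-type noise.**
If `ξ` is a random vector in `ℝ^d` whose law `μ` is the probability measure with
density proportional to `exp (-(ε/2) * ‖z‖)` with respect to Lebesgue measure, then
for every direction `a` with `‖a‖₂ ≤ 1` and every `β` with `|β| ≤ 1/b = ε/4`, the
moment generating function satisfies
`E[exp (β ⟪ξ, a⟫)] ≤ exp (β² σ₁D² / 2)` with `σ₁D² = 18 d² / ε²`. -/
theorem laplace_noise_sub_exponential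
    (ε : ℝ) (hε : 0 < ε) (d : ℕ) (hd : 1 ≤ d)
    (C : ℝ) (hC : 0 < C)
    (μ : Measure (EuclideanSpace ℝ (Fin d)))
    (hμ : μ = volume.withDensity
      (fun z => ENNReal.ofReal (C * Real.exp (-(ε / 2) * ‖z‖))))
    (hprob : IsProbabilityMeasure μ) :
    ∀ a : EuclideanSpace ℝ (Fin d), ‖a‖ ≤ 1 →
      ∀ β : ℝ, |β| ≤ ε / 4 →
        ∫ z, Real.exp (β * ⟪z, a⟫) ∂μ
          ≤ Real.exp (β ^ 2 * (18 * (d : ℝ) ^ 2 / ε ^ 2) / 2) := by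
  subst hμ
  intro a ha β hβ
  have : IsProbabilityMeasure (laplaceMeasure volume C (ε / 2)) := hprob
  have hproxy : (d : ℝ) * (d + 2) / (ε / 2) ^ 2 ≤ 18 * (d : ℝ) ^ 2 / ε ^ 2 := by
    have hd' : (1 : ℝ) ≤ d := by exact_mod_cast hd
    rw [div_pow, div_div_eq_mul_div, div_le_div_iff_of_pos_right (by positivity)]
    nlinarith
  calc ∫ z, Real.exp (β * ⟪z, a⟫) ∂laplaceMeasure volume C (ε / 2)
      = mgf (innerSL ℝ a) (laplaceMeasure volume C (ε / 2)) β := by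
        simp only [mgf, innerSL_apply_apply, real_inner_comm a]
    _ ≤ Real.exp (β ^ 2 * (d * (d + 2) / (ε / 2) ^ 2) / 2) := by
        simpa only [finrank_euclideanSpace_fin] using
          laplace_noise_sub_exponential_general volume (C := C) (half_pos hε)
            ((innerSL_apply_norm ℝ a).trans_le ha) (hβ.trans_eq (by ring))
    _ ≤ Real.exp (β ^ 2 * (18 * (d : ℝ) ^ 2 / ε ^ 2) / 2) := by gcongr
end

section
/- Regret of scale-free projected online gradient descent on the unit ball: Let g_1,…,g_T ∈ ℝ^d with not all g_t zero. Define iterates q_1 = 0 and, for t ≥ 1, q_{t+1} = Π_B( q_t + g_t / √(∑_{s=1}^t ‖g_s‖₂²) ), where Π_B denotes Euclidean projection onto the closed unit ball B ⊆ ℝ^d and the step is taken to be 0 whenever ∑_{s=1}^t ‖g_s‖₂² = 0. Then for every comparator u with ‖u‖₂ ≤ 1, ∑_{t=1}^T ⟨g_t, u − q_t⟩ ≤ 3 √(∑_{t=1}^T ‖g_t‖₂²). -/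
open Finset
open scoped RealInnerProductSpace

/-- Euclidean projection onto the closed unit ball of `ℝ^d`. -/
noncomputable def projUnitBall {d : ℕ} (x : EuclideanSpace ℝ (Fin d)) :
    EuclideanSpace ℝ (Fin d) :=
  (max 1 ‖x‖)⁻¹ • x

/-!
Let `S t = ∑ s < t, ‖g s‖²`. Projecting does not move the iterate away from the comparator `u`, so
expanding the square of `u - (q t + g t / √S (t+1))` gives
`⟪g t, u - q t⟫ ≤ √S (t+1) / 2 * (‖u - q t‖² - ‖u - q (t+1)‖²) + ‖g t‖² / (2 √S (t+1))`.
As `√S` is monotone and `‖u - q t‖ ≤ D`, Abel summation bounds the sum of the first terms by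
`D² / 2 * √S T`. As `‖g t‖² = S (t+1) - S t`, the second terms are at most `√S (t+1) - √S t`, which
telescopes to `√S T`. For the unit ball `D = 2`.
-/

theorem norm_inv_max_one_norm_smul_le_one {E : Type*} [NormedAddCommGroup E] [NormedSpace ℝ E]
    (x : E) : ‖(max 1 ‖x‖)⁻¹ • x‖ ≤ 1 := by
  have hmax : 0 < max 1 ‖x‖ := lt_max_of_lt_left one_pos
  rw [norm_smul, norm_inv, Real.norm_of_nonneg hmax.le, inv_mul_le_one₀ hmax]
  exact le_max_right _ _

theorem sum_div_sqrt_sum_range_succ_le {f : ℕ → ℝ} (hf : ∀ t, 0 ≤ f t) (n : ℕ) :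
    ∑ t ∈ range n, f t / √(∑ s ∈ range (t + 1), f s) ≤ 2 * √(∑ t ∈ range n, f t) := by
  induction n with
  | zero => simp
  | succ n ih =>
    have hsum (k : ℕ) : 0 ≤ ∑ s ∈ range k, f s := sum_nonneg fun s _ => hf s
    have hsucc : f n = √(∑ s ∈ range (n + 1), f s) ^ 2 - √(∑ s ∈ range n, f s) ^ 2 := by
      rw [Real.sq_sqrt (hsum _), Real.sq_sqrt (hsum _), sum_range_succ, add_sub_cancel_left]
    have hterm : f n / √(∑ s ∈ range (n + 1), f s) ≤
        2 * (√(∑ s ∈ range (n + 1), f s) - √(∑ s ∈ range n, f s)) := by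
      have hmono : √(∑ s ∈ range n, f s) ≤ √(∑ s ∈ range (n + 1), f s) :=
        Real.sqrt_le_sqrt (sum_range_succ f n ▸ le_add_of_nonneg_right (hf n))
      refine div_le_of_le_mul₀ (Real.sqrt_nonneg _) (by linarith) ?_
      nlinarith [sq_nonneg (√(∑ s ∈ range (n + 1), f s) - √(∑ s ∈ range n, f s))]
    rw [sum_range_succ]
    linarith

section InnerProductSpace

variable {E : Type*} [NormedAddCommGroup E] [InnerProductSpace ℝ E]

theorem norm_sub_le_norm_sub_of_inner_nonpos {u p x : E} (h : ⟪u - p, x - p⟫ ≤ 0) :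
    ‖u - p‖ ≤ ‖u - x‖ := by
  have hexpand := norm_sub_sq_real (u - p) (x - p)
  rw [sub_sub_sub_cancel_right] at hexpand
  refine le_of_sq_le_sq ?_ (norm_nonneg _)
  linarith [sq_nonneg ‖x - p‖]

theorem inner_sub_inv_max_one_norm_smul_nonpos {u : E} (hu : ‖u‖ ≤ 1) (x : E) :
    ⟪u - (max 1 ‖x‖)⁻¹ • x, x - (max 1 ‖x‖)⁻¹ • x⟫ ≤ 0 := by
  rcases le_total ‖x‖ 1 with hx | hx
  · simp [max_eq_left hx]
  rw [max_eq_right hx]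
  have hcoeff : 0 ≤ 1 - ‖x‖⁻¹ := sub_nonneg.2 (inv_le_one_of_one_le₀ hx)
  have hinner : ⟪u - ‖x‖⁻¹ • x, x⟫ ≤ 0 := by
    have hux : ⟪u, x⟫ ≤ ‖x‖ :=
      (real_inner_le_norm u x).trans (mul_le_of_le_one_left (norm_nonneg x) hu)
    have hself : ⟪‖x‖⁻¹ • x, x⟫ = ‖x‖ := by
      rw [real_inner_smul_left, real_inner_self_eq_norm_sq]
      field_simp
    rw [inner_sub_left, hself]
    exact sub_nonpos.2 hux
  calc ⟪u - ‖x‖⁻¹ • x, x - ‖x‖⁻¹ • x⟫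
      = (1 - ‖x‖⁻¹) * ⟪u - ‖x‖⁻¹ • x, x⟫ := by
        rw [← real_inner_smul_right, sub_smul, one_smul]
    _ ≤ 0 := mul_nonpos_of_nonneg_of_nonpos hcoeff hinner

theorem inner_add_mul_norm_sub_gradient_step_sq {a : ℝ} {g : E} (ha : a = 0 → g = 0) (u x : E) :
    ⟪g, u - x⟫ + a / 2 * ‖u - (x + a⁻¹ • g)‖ ^ 2 = a / 2 * ‖u - x‖ ^ 2 + ‖g‖ ^ 2 / a / 2 := by
  obtain rfl | ha₀ := eq_or_ne a 0
  · simp [ha rfl]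
  rw [← sub_sub, norm_sub_sq_real (u - x), real_inner_smul_right, norm_smul, mul_pow, norm_inv,
    inv_pow, Real.norm_eq_abs, sq_abs, real_inner_comm]
  field_simp
  ring

theorem sum_inner_add_le_of_gradient_steps {g q : ℕ → E} {a : ℕ → ℝ} {u : E} {D : ℝ}
    (ha₀ : 0 ≤ a 0) (ha : Monotone a) (hag : ∀ t, a (t + 1) = 0 → g t = 0)
    (hq : ∀ t, ‖u - q (t + 1)‖ ≤ ‖u - (q t + (a (t + 1))⁻¹ • g t)‖)
    (hD : ∀ t, ‖u - q t‖ ≤ D) (n : ℕ) :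
    ∑ t ∈ range n, ⟪g t, u - q t⟫ + a n / 2 * ‖u - q n‖ ^ 2 ≤
      D ^ 2 / 2 * a n + (∑ t ∈ range n, ‖g t‖ ^ 2 / a (t + 1)) / 2 := by
  have hDsq (t : ℕ) : ‖u - q t‖ ^ 2 ≤ D ^ 2 := pow_le_pow_left₀ (norm_nonneg _) (hD t) 2
  induction n with
  | zero =>
    have := mul_le_mul_of_nonneg_left (hDsq 0) ha₀
    simp only [range_zero, sum_empty]
    linarith
  | succ n ih =>
    have ha_nonneg : 0 ≤ a (n + 1) := ha₀.trans (ha (Nat.zero_le _))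
    have hround : ⟪g n, u - q n⟫ + a (n + 1) / 2 * ‖u - q (n + 1)‖ ^ 2 ≤
        a (n + 1) / 2 * ‖u - q n‖ ^ 2 + ‖g n‖ ^ 2 / a (n + 1) / 2 := by
      rw [← inner_add_mul_norm_sub_gradient_step_sq (hag n)]
      gcongr
      exact hq n
    have hdrift : (a (n + 1) - a n) * ‖u - q n‖ ^ 2 ≤ (a (n + 1) - a n) * D ^ 2 :=
      mul_le_mul_of_nonneg_left (hDsq n) (sub_nonneg.2 (ha n.le_succ))
    rw [sum_range_succ, sum_range_succ]
    linarith

/-- As `0⁻¹ = 0`, no step is taken while all gradients so far vanish. -/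
theorem scale_free_ogd_regret_general {K : Set E} {D : ℝ} {P : E → E} {g q : ℕ → E} {u : E}
    (hD : ∀ v ∈ K, ∀ w ∈ K, ‖v - w‖ ≤ D) (hPK : ∀ x, P x ∈ K)
    (hP : ∀ v ∈ K, ∀ x, ‖v - P x‖ ≤ ‖v - x‖) (hq₀ : q 0 ∈ K)
    (hq : ∀ t, q (t + 1) = P (q t + (√(∑ s ∈ range (t + 1), ‖g s‖ ^ 2))⁻¹ • g t))
    (hu : u ∈ K) (T : ℕ) :
    ∑ t ∈ range T, ⟪g t, u - q t⟫ ≤ (D ^ 2 / 2 + 1) * √(∑ t ∈ range T, ‖g t‖ ^ 2) := by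
  set a : ℕ → ℝ := fun t => √(∑ s ∈ range t, ‖g s‖ ^ 2) with ha
  have ha_mono : Monotone a := fun m n hmn => Real.sqrt_le_sqrt <|
    sum_le_sum_of_subset_of_nonneg (range_mono hmn) fun s _ _ => sq_nonneg ‖g s‖
  have hag (t : ℕ) (hat : a (t + 1) = 0) : g t = 0 := by
    rw [ha, Real.sqrt_eq_zero (by positivity),
      sum_eq_zero_iff_of_nonneg fun s _ => sq_nonneg ‖g s‖] at hat
    simpa using hat t (self_mem_range_succ t)
  have hqK : ∀ t, q t ∈ K
    | 0 => hq₀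
    | t + 1 => hq t ▸ hPK _
  have hregret := sum_inner_add_le_of_gradient_steps (Real.sqrt_nonneg _) ha_mono hag
    (fun t => hq t ▸ hP u hu _) (fun t => hD u hu _ (hqK t)) T
  have hpotential : 0 ≤ a T / 2 * ‖u - q T‖ ^ 2 := by positivity
  have hsum : ∑ t ∈ range T, ‖g t‖ ^ 2 / a (t + 1) ≤ 2 * a T :=
    sum_div_sqrt_sum_range_succ_le (fun t => sq_nonneg ‖g t‖) T
  linarith

end InnerProductSpace

/-- **Regret of scale-free projected online gradient descent on the unit ball.**
With `q 0 = 0` (this is `q_1`) and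
`q (t+1) = Π_B (q t + g t / √(∑_{s ≤ t} ‖g s‖²))` (step taken to be `0` when the
denominator vanishes), for every comparator `u` in the unit ball,
`∑_{t<T} ⟪g t, u - q t⟫ ≤ 3 √(∑_{t<T} ‖g t‖²)`, provided not all `g t`, `t < T`, vanish. -/
theorem scale_free_ogd_regret
    (d T : ℕ) (g : ℕ → EuclideanSpace ℝ (Fin d))
    (hg : ¬ ∀ t < T, g t = 0)
    (q : ℕ → EuclideanSpace ℝ (Fin d))
    (hq0 : q 0 = 0)
    (hq : ∀ t, q (t + 1) =
      projUnitBall (q t +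
        (if (∑ s ∈ Finset.range (t + 1), ‖g s‖ ^ 2) = 0 then 0
         else (Real.sqrt (∑ s ∈ Finset.range (t + 1), ‖g s‖ ^ 2))⁻¹ • g t)))
    (u : EuclideanSpace ℝ (Fin d)) (hu : ‖u‖ ≤ 1) :
    ∑ t ∈ Finset.range T, ⟪g t, u - q t⟫
      ≤ 3 * Real.sqrt (∑ t ∈ Finset.range T, ‖g t‖ ^ 2) := by
  have hstep (t : ℕ) : q (t + 1) =
      projUnitBall (q t + (√(∑ s ∈ range (t + 1), ‖g s‖ ^ 2))⁻¹ • g t) := by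
    rw [hq t]
    split_ifs with hS <;> simp [hS]
  have hregret := scale_free_ogd_regret_general (K := {x | ‖x‖ ≤ 1})
    (fun _ hv _ hw => norm_sub_le_of_le hv hw) norm_inv_max_one_norm_smul_le_one
    (fun _ hv x => norm_sub_le_norm_sub_of_inner_nonpos
      (inner_sub_inv_max_one_norm_smul_nonpos hv x))
    (by simp [hq0]) hstep hu T
  rwa [show ((1 + 1) ^ 2 / 2 + 1 : ℝ) = 3 by norm_num] at hregret
end
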